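/- Let r₂(d) = (2/√π)·Γ(d/2 + 1)^{1/d} and define ρ(d) = Vol(B_{2,d}(r₂(d)) ∩ B_{∞,d}(1)) / Vol(B_{∞,d}(1)). Then lim sup_{d→∞} (1/d)·log ρ(d) ≤ −(2/(πe) − 1/3)²; equivalently, ρ(d) ≤ exp(−(2/(πe) − 1/3)²·d + o(d)) as d → ∞. -/

import Mathlib

open MeasureTheory ENNReal Filter

/-- The radius for which the Euclidean ball in `ℝ^d` has the same Lebesgue volume as the
`ℓ∞` ball of radius `1`: `r₂(d) = (2/√π) · Γ(d/2 + 1)^(1/d)`. -/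
noncomputable def r2 (d : ℕ) : ℝ :=
  (2 / Real.sqrt Real.pi) * Real.Gamma ((d : ℝ) / 2 + 1) ^ ((1 : ℝ) / d)

/-- The volume ratio `ρ(d) = Vol(B_{2,d}(r₂ d) ∩ B_{∞,d}(1)) / Vol(B_{∞,d}(1))`. -/
noncomputable def rho (d : ℕ) : ℝ≥0∞ :=
  volume ({x : EuclideanSpace ℝ (Fin d) | ‖x‖ ≤ r2 d}
      ∩ {x : EuclideanSpace ℝ (Fin d) | ∀ i, |x i| ≤ 1})
    / volume {x : EuclideanSpace ℝ (Fin d) | ∀ i, |x i| ≤ 1}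

lemma vol_cube_aux (d : ℕ) (c : ℝ) (hc : 0 ≤ c) :
    (volume : Measure (Fin d → ℝ)).real {x | ∀ i, |x i| ≤ c} = (2 * c) ^ d := by
  have h : {x : Fin d → ℝ | ∀ i, |x i| ≤ c} = Set.Icc (fun _ => -c) (fun _ => c) := by
    ext x
    simp only [Set.mem_ofPred_eq, Set.mem_Icc, Pi.le_def, abs_le]
    exact forall_and
  rw [h, measureReal_def, Real.volume_Icc_pi_toReal (fun _ => by linarith)]
  simp
  ring

lemma rho_toReal_aux (d : ℕ) :
    (rho d).toReal = (volume : Measure (Fin d → ℝ)).real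
      {x | ∑ i, x i ^ 2 ≤ r2 d ^ 2 ∧ ∀ i, |x i| ≤ 1} / 2 ^ d := by
  have hr : 0 ≤ r2 d := by
    unfold r2
    have : 0 < Real.Gamma ((d : ℝ) / 2 + 1) := Real.Gamma_pos_of_pos (by positivity)
    positivity
  have hmp := PiLp.volume_preserving_toLp (Fin d)
  have he : MeasurableEmbedding (@WithLp.toLp 2 (Fin d → ℝ)) :=
    (MeasurableEquiv.toLp 2 (Fin d → ℝ)).measurableEmbedding
  unfold rho
  rw [← hmp.measure_preimage_emb he, ← hmp.measure_preimage_emb he, ENNReal.toReal_div]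
  congr 1
  · rw [measureReal_def]
    congr 2
    ext x
    simp only [Set.mem_preimage, Set.mem_inter_iff, Set.mem_ofPred_eq, EuclideanSpace.norm_eq,
      Real.norm_eq_abs, sq_abs]
    rw [Real.sqrt_le_left hr]
  · have := vol_cube_aux d 1 zero_le_one
    rw [mul_one, measureReal_def] at this
    exact this

lemma cube_fin_aux (d : ℕ) (S : Set (Fin d → ℝ)) (hS : S ⊆ {x | ∀ i, |x i| ≤ 1}) :
    volume S ≠ ⊤ := by
  refine measure_ne_top_of_subset hS ?_
  have h : {x : Fin d → ℝ | ∀ i, |x i| ≤ 1} = Set.Icc (fun _ => -1) (fun _ => 1) := by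
    ext x
    simp only [Set.mem_ofPred_eq, Set.mem_Icc, Pi.le_def, abs_le]
    exact forall_and
  rw [h, Real.volume_Icc_pi]
  exact ENNReal.prod_ne_top (by simp)

lemma rho_ge_aux (d : ℕ) (c : ℝ) (hc : 0 ≤ c) (hc1 : c ≤ 1) (h : d * c ^ 2 ≤ r2 d ^ 2) :
    c ^ d ≤ (rho d).toReal := by
  rw [rho_toReal_aux, le_div_iff₀ (by positivity), mul_comm, ← mul_pow, ← vol_cube_aux d c hc]
  refine measureReal_mono ?_ (cube_fin_aux d _ fun x hx => hx.2)
  intro x hx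
  refine ⟨?_, fun i => (hx i).trans hc1⟩
  refine le_trans ?_ h
  calc ∑ i, x i ^ 2 ≤ ∑ i : Fin d, c ^ 2 :=
        Finset.sum_le_sum fun i _ => by
          rw [← sq_abs]; exact pow_le_pow_left₀ (abs_nonneg _) (hx i) 2
    _ = d * c ^ 2 := by simp

lemma exp_neg_le_aux (y : ℝ) (hy : 0 ≤ y) : Real.exp (-y) ≤ 1 - y + y ^ 2 / 2 := by
  have h := Real.quadratic_le_exp_of_nonneg hy
  rw [Real.exp_neg, inv_le_comm₀ (Real.exp_pos _) (by nlinarith [sq_nonneg (y - 1)])]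
  refine le_trans ?_ h
  rw [inv_le_iff_one_le_mul₀ (by nlinarith [sq_nonneg (y - 1)])]
  nlinarith [sq_nonneg (y ^ 2)]

lemma int_aux (l a : ℝ) (hl : 0 ≤ l) :
    ∫ x in Set.Icc (-1 : ℝ) 1, Real.exp (l * (a - x ^ 2))
      ≤ 2 * Real.exp (l * (a - 1 / 3) + l ^ 2 / 10) := by
  rw [integral_Icc_eq_integral_Ioc, ← intervalIntegral.integral_of_le (by norm_num)]
  have h1 : ∫ x in (-1 : ℝ)..1, Real.exp (l * (a - x ^ 2)) ≤
      ∫ x in (-1 : ℝ)..1, Real.exp (l * a) * (1 - l * x ^ 2 + l ^ 2 / 2 * x ^ 4) := by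
    refine intervalIntegral.integral_mono_on (by norm_num) ?_ ?_ ?_
    · exact (by fun_prop : Continuous fun x : ℝ => Real.exp (l * (a - x ^ 2))).intervalIntegrable _ _
    · exact (by fun_prop : Continuous fun x : ℝ =>
        Real.exp (l * a) * (1 - l * x ^ 2 + l ^ 2 / 2 * x ^ 4)).intervalIntegrable _ _
    · intro x _
      have := exp_neg_le_aux (l * x ^ 2) (by positivity)
      rw [show l * (a - x ^ 2) = l * a + -(l * x ^ 2) by ring, Real.exp_add]
      refine mul_le_mul_of_nonneg_left (this.trans (le_of_eq (by ring))) (Real.exp_pos _).le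
  have h2 : ∫ x in (-1 : ℝ)..1, Real.exp (l * a) * (1 - l * x ^ 2 + l ^ 2 / 2 * x ^ 4)
      = Real.exp (l * a) * (2 * (1 - l / 3 + l ^ 2 / 10)) := by
    rw [intervalIntegral.integral_const_mul, intervalIntegral.integral_add,
      intervalIntegral.integral_sub]
    · simp only [intervalIntegral.integral_const_mul, integral_pow, intervalIntegral.integral_const]
      norm_num
      ring
    all_goals exact (by fun_prop : Continuous _).intervalIntegrable _ _
  rw [h2] at h1
  refine h1.trans ?_
  rw [show l * (a - 1 / 3) + l ^ 2 / 10 = l * a + (-(l / 3) + l ^ 2 / 10) by ring, Real.exp_add]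
  have := Real.add_one_le_exp (-(l / 3) + l ^ 2 / 10)
  have := mul_le_mul_of_nonneg_left this (Real.exp_pos (l * a)).le
  nlinarith

lemma rho_le_aux (d : ℕ) (l a : ℝ) (hl : 0 ≤ l) (h : r2 d ^ 2 ≤ d * a) :
    (rho d).toReal ≤ Real.exp (l * (a - 1 / 3) + l ^ 2 / 10) ^ d := by
  rw [rho_toReal_aux, div_le_iff₀ (by positivity), mul_comm, ← mul_pow]
  set S : Set (Fin d → ℝ) := {x | ∑ i, x i ^ 2 ≤ r2 d ^ 2 ∧ ∀ i, |x i| ≤ 1} with hS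
  have hSm : MeasurableSet S := by
    refine MeasurableSet.inter ?_ ?_
    · exact measurableSet_le (f := fun x : Fin d → ℝ => ∑ i, x i ^ 2) (g := fun _ => r2 d ^ 2)
        (by fun_prop) (by fun_prop)
    · have : {x : Fin d → ℝ | ∀ i, |x i| ≤ 1} = ⋂ i, {x : Fin d → ℝ | |x i| ≤ 1} := by
        ext x; simp
      change MeasurableSet {x : Fin d → ℝ | ∀ i, |x i| ≤ 1}
      rw [this]
      exact MeasurableSet.iInter fun i => measurableSet_le (by fun_prop) (by fun_prop)
  set f : ℝ → ℝ := (Set.Icc (-1 : ℝ) 1).indicator (fun x => Real.exp (l * (a - x ^ 2))) with hf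
  have hf0 : ∀ x, 0 ≤ f x := fun x => Set.indicator_nonneg (fun _ _ => (Real.exp_pos _).le) x
  have hfi : Integrable f := by
    rw [hf, integrable_indicator_iff measurableSet_Icc]
    exact (by fun_prop : Continuous fun x : ℝ => Real.exp (l * (a - x ^ 2))).integrableOn_Icc
  have h1 : (volume : Measure (Fin d → ℝ)).real S ≤ ∫ x : Fin d → ℝ, ∏ i, f (x i) := by
    rw [← integral_indicator_one hSm]
    refine integral_mono ?_ (Integrable.fintype_prod fun _ => hfi) ?_
    · rw [integrable_indicator_iff hSm]
      exact integrableOn_const (cube_fin_aux d _ fun x hx => hx.2)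
    · intro x
      refine Set.indicator_apply_le' (fun hx => ?_)
        (fun _ => Finset.prod_nonneg fun i _ => hf0 _)
      have : ∀ i, f (x i) = Real.exp (l * (a - x i ^ 2)) := fun i =>
        Set.indicator_of_mem (Set.mem_Icc.mpr (abs_le.mp (hx.2 i))) _
      simp only [this, ← Real.exp_sum, ← Finset.mul_sum, Finset.sum_sub_distrib]
      refine Real.one_le_exp (mul_nonneg hl ?_)
      have := hx.1
      simp
      linarith
  rw [integral_fintype_prod_volume_eq_pow, Fintype.card_fin, hf,
    integral_indicator measurableSet_Icc] at h1
  refine h1.trans (pow_le_pow_left₀ ?_ (int_aux l a hl) d)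
  exact integral_nonneg fun x => (Real.exp_pos _).le

lemma gamma_le_aux (s : ℝ) (hs : 0 < s) :
    Real.Gamma (s + 1) ≤ 20 * (s / (19 / 20 * Real.exp 1)) ^ s := by
  rw [Real.Gamma_eq_integral (by linarith)]
  have hI : ∫ x in Set.Ioi (0 : ℝ), (s / (19 / 20 * Real.exp 1)) ^ s * Real.exp (-(1 / 20) * x)
      = 20 * (s / (19 / 20 * Real.exp 1)) ^ s := by
    rw [integral_const_mul, integral_exp_mul_Ioi (by norm_num)]
    simp
    ring
  rw [← hI]
  refine setIntegral_mono_on ?_ ?_ measurableSet_Ioi ?_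
  · exact Real.GammaIntegral_convergent (by linarith)
  · exact (integrableOn_exp_mul_Ioi (by norm_num) 0).const_mul _
  · intro x hx
    have hx : 0 < x := hx
    have key : x ^ s ≤ (s / (19 / 20 * Real.exp 1)) ^ s * Real.exp (19 / 20 * x) := by
      have h1 := Real.add_one_le_exp (19 / 20 * x / s - 1)
      have h2 : x ≤ s / (19 / 20 * Real.exp 1) * Real.exp (19 / 20 * x / s) := by
        rw [Real.exp_sub] at h1
        have : x = s / (19 / 20) * (19 / 20 * x / s - 1 + 1) := by field_simp; ring
        rw [this]
        refine (mul_le_mul_of_nonneg_left h1 (by positivity)).trans (le_of_eq ?_)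
        rw [← this]
        field_simp
      refine (Real.rpow_le_rpow hx.le h2 hs.le).trans (le_of_eq ?_)
      rw [Real.mul_rpow (by positivity) (by positivity), ← Real.exp_mul]
      congr 2
      field_simp
    rw [add_sub_cancel_right]
    calc Real.exp (-x) * x ^ s ≤
        Real.exp (-x) * ((s / (19 / 20 * Real.exp 1)) ^ s * Real.exp (19 / 20 * x)) :=
          mul_le_mul_of_nonneg_left key (Real.exp_pos _).le
      _ = _ := by
        rw [mul_left_comm, ← Real.exp_add]
        congr 2
        ring

lemma r2_sq_aux (d : ℕ) (hd : 0 < d) :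
    r2 d ^ 2 = 4 / Real.pi * Real.Gamma ((d : ℝ) / 2 + 1) ^ ((2 : ℝ) / d) := by
  have hG : 0 < Real.Gamma ((d : ℝ) / 2 + 1) := Real.Gamma_pos_of_pos (by positivity)
  unfold r2
  rw [mul_pow, div_pow, Real.sq_sqrt Real.pi_pos.le, ← Real.rpow_natCast (_ ^ _) 2,
    ← Real.rpow_mul hG.le]
  norm_num
  congr 1
  ring

lemma r2_sq_le_aux (d : ℕ) (hd : 0 < d) :
    r2 d ^ 2 ≤ d * (2 / (Real.pi * Real.exp 1) * (20 / 19) * (20 : ℝ) ^ ((2 : ℝ) / d)) := by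
  have hd' : (0 : ℝ) < d := by exact_mod_cast hd
  have hG : 0 < Real.Gamma ((d : ℝ) / 2 + 1) := Real.Gamma_pos_of_pos (by positivity)
  rw [r2_sq_aux d hd]
  have h1 := Real.rpow_le_rpow hG.le (gamma_le_aux ((d : ℝ) / 2) (by positivity))
    (by positivity : (0 : ℝ) ≤ 2 / d)
  rw [Real.mul_rpow (by norm_num) (by positivity), ← Real.rpow_mul (by positivity),
    show (d : ℝ) / 2 * (2 / d) = 1 by field_simp, Real.rpow_one] at h1
  refine (mul_le_mul_of_nonneg_left h1 (by positivity)).trans (le_of_eq ?_)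
  have := Real.pi_pos
  field_simp
  ring

lemma r2_sq_ge_aux (k : ℕ) (hk : 0 < k) :
    ((2 * k : ℕ) : ℝ) * (1 / 4) ^ 2 ≤ r2 (2 * k) ^ 2 := by
  have hk' : (0 : ℝ) < k := by exact_mod_cast hk
  rw [r2_sq_aux _ (by omega)]
  have e1 : (((2 * k : ℕ) : ℝ)) / 2 + 1 = (k : ℝ) + 1 := by push_cast; ring
  have e2 : (2 : ℝ) / ((2 * k : ℕ) : ℝ) = 1 / k := by push_cast; field_simp
  rw [e1, e2, Real.Gamma_nat_eq_factorial]
  have h1 : ((k : ℝ) / Real.exp 1) ^ (k : ℝ) ≤ (k.factorial : ℝ) := by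
    have := Real.pow_div_factorial_le_exp (k : ℝ) hk'.le k
    rw [div_le_iff₀ (by positivity)] at this
    rw [Real.rpow_natCast, div_pow, ← Real.exp_nat_mul, mul_one, div_le_iff₀ (Real.exp_pos _)]
    linarith
  have h2 := Real.rpow_le_rpow (by positivity) h1 (by positivity : (0 : ℝ) ≤ 1 / k)
  rw [← Real.rpow_mul (by positivity), mul_one_div_cancel hk'.ne', Real.rpow_one] at h2
  refine le_trans ?_ (mul_le_mul_of_nonneg_left h2 (by positivity))
  have := Real.pi_pos
  have := Real.pi_le_four
  have := Real.exp_one_lt_d9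
  rw [div_mul_div_comm, le_div_iff₀ (by positivity)]
  push_cast
  have : Real.pi * Real.exp 1 ≤ 4 * 3 := mul_le_mul (by linarith) (by linarith) (by positivity) (by norm_num)
  nlinarith

lemma rho_pos_aux (d : ℕ) : 0 < (rho d).toReal := by
  have hr : 0 < r2 d := by
    unfold r2
    have : 0 < Real.Gamma ((d : ℝ) / 2 + 1) := Real.Gamma_pos_of_pos (by positivity)
    have := Real.pi_pos
    positivity
  have hc : 0 < min 1 (r2 d / (d + 1)) := by positivity
  refine lt_of_lt_of_le (pow_pos hc d) (rho_ge_aux d _ hc.le (min_le_left _ _) ?_)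
  have h1 : (min 1 (r2 d / (d + 1))) ^ 2 ≤ (r2 d / (d + 1)) ^ 2 :=
    pow_le_pow_left₀ hc.le (min_le_right _ _) 2
  refine (mul_le_mul_of_nonneg_left h1 (by positivity)).trans ?_
  rw [div_pow, mul_div_assoc', div_le_iff₀ (by positivity), mul_comm]
  have : (0 : ℝ) ≤ d := by positivity
  exact mul_le_mul_of_nonneg_left (by nlinarith) (by positivity)

/-- `limsup_{d→∞} (1/d) · log ρ(d) ≤ −(2/(πe) − 1/3)²`, i.e.
`ρ(d) ≤ exp(−(2/(πe) − 1/3)² d + o(d))`. -/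
theorem limsup_log_rho_div_le :
    limsup (fun d : ℕ => Real.log (rho d).toReal / d) atTop
      ≤ -(2 / (Real.pi * Real.exp 1) - 1 / 3) ^ 2 := by
  have hcob : IsCoboundedUnder (· ≤ ·) atTop (fun d : ℕ => Real.log (rho d).toReal / d) := by
    refine IsCoboundedUnder.of_frequently_ge (a := Real.log (1 / 4)) ?_
    rw [frequently_atTop]
    intro N
    refine ⟨2 * (N + 1), by omega, ?_⟩
    have h := rho_ge_aux (2 * (N + 1)) (1 / 4) (by norm_num) (by norm_num)
      (r2_sq_ge_aux (N + 1) (by omega))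
    have h2 := Real.log_le_log (by positivity) h
    rw [Real.log_pow] at h2
    rw [le_div_iff₀ (by positivity)]
    linarith
  refine limsup_le_of_le hcob ?_
  have hlim : Tendsto (fun d : ℕ => (20 : ℝ) ^ ((2 : ℝ) / d)) atTop (nhds 1) := by
    have h0 : Tendsto (fun d : ℕ => (2 : ℝ) / d) atTop (nhds 0) :=
      tendsto_const_div_atTop_nhds_zero_nat 2
    have := (Real.continuous_const_rpow (by norm_num : (20 : ℝ) ≠ 0)).continuousAt.tendsto.comp h0
    simpa [Function.comp_def] using this
  have hpe : 8.5 < Real.pi * Real.exp 1 := by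
    have := Real.pi_gt_d4
    have := Real.exp_one_gt_d9
    nlinarith
  set A := 2 / (Real.pi * Real.exp 1) with hA
  have hA0 : 0 < A := by positivity
  have hA1 : A < 0.24 := by
    rw [hA, div_lt_iff₀ (by linarith)]
    linarith
  filter_upwards [hlim.eventually_le_const (by norm_num : (1 : ℝ) < 1.05), eventually_gt_atTop 0]
    with d hd hd0
  have hd0' : (0 : ℝ) < d := by exact_mod_cast hd0
  have hle := rho_le_aux d (5 * (1 / 3 - A)) _ (by linarith) (r2_sq_le_aux d hd0)
  have hlog := Real.log_le_log (rho_pos_aux d) hle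
  rw [Real.log_pow, Real.log_exp, ← hA] at hlog
  rw [div_le_iff₀ hd0', mul_comm]
  refine hlog.trans (mul_le_mul_of_nonneg_left ?_ hd0'.le)
  set B := A * (20 / 19) * (20 : ℝ) ^ ((2 : ℝ) / d) with hB
  have hB1 : B ≤ A + 0.3 * (1 / 3 - A) := by
    have : B ≤ A * (20 / 19) * 1.05 := mul_le_mul_of_nonneg_left hd (by positivity)
    linarith
  have := mul_le_mul_of_nonneg_left hB1 (by linarith : 0 ≤ 5 * (1 / 3 - A))
  nlinarith
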